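/- Assume f satisfies (A1)–(A3) and fix χ > 0. There is ε₀ > 0 such that for all 0 < ε < ε₀: if {Ψ_{x̂_n}^{p_n}}_{n≤0} is a negative weak ε-gpo and ŷ = (y_n)_{n∈ℤ}, ẑ = (z_n)_{n∈ℤ} both belong to its unstable set V^u[{Ψ_{x̂_n}^{p_n}}_{n≤0}] := {x̂ ∈ M̂ : ϑ_n[x̂] ∈ Ψ_{x̂_n}([−p_n, p_n]) for all n ≤ 0}, then d(y_n, z_n) ≤ 2 p₀ e^{χn/2} for all n ≤ 0; consequently d̂(f̂^n(ŷ), f̂^n(ẑ)) ≤ 2 p₀ e^{χn/2} for all n ≤ 0. -/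

import Mathlib

open Real MeasureTheory Filter Topology Metric Set

noncomputable section

namespace OneDim

/-- The interval `M = [0, 1/2]`. -/
def Mset : Set ℝ := Set.Icc 0 (1/2)

/-- Data of a piecewise `C^{1+β}` interval map `f : M → M` with discontinuity set `D`,
constants `β ∈ (0,1)`, `a, K > 1`, radius function `r` and inverse branches `g`. -/
structure GoodMap where
  f : ℝ → ℝ
  D : Set ℝ
  β : ℝ
  a : ℝ
  K : ℝ
  r : ℝ → ℝ
  g : ℝ → ℝ → ℝ
  hβ0 : 0 < β
  hβ1 : β < 1
  ha : 1 < a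
  hK : 1 < K
  hmaps : ∀ x ∈ Mset, f x ∈ Mset
  hD : D ⊆ Mset
  hdiff : DifferentiableOn ℝ f (Mset \ D)

namespace GoodMap

/-- The critical set `C = {x ∈ M \ D : df_x = 0}`. -/
def crit (F : GoodMap) : Set ℝ := {x | x ∈ Mset \ F.D ∧ deriv F.f x = 0}

/-- The singular set `S = C ∪ D`. -/
def S (F : GoodMap) : Set ℝ := F.crit ∪ F.D

/-- Distance to the singular set. -/
def dS (F : GoodMap) (x : ℝ) : ℝ := Metric.infDist x F.S

/-- Conditions (A1)–(A3). -/
def SatA (F : GoodMap) : Prop :=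
  ∀ x ∈ Mset, x ∉ F.S → F.f x ∉ F.S →
    (min (F.dS x ^ F.a) (F.dS (F.f x) ^ F.a) < F.r x ∧ F.r x < 1) ∧
    -- (A1)
    (Set.InjOn F.f (Metric.ball x (2 * F.r x)) ∧
      (∀ y ∈ Metric.ball x (2 * F.r x), DifferentiableAt ℝ F.f y) ∧
      F.g x (F.f x) = x ∧
      (∀ z ∈ Metric.ball (F.f x) (2 * F.r x), F.f (F.g x z) = z) ∧
      Set.InjOn (F.g x) (Metric.ball (F.f x) (2 * F.r x)) ∧
      (∀ z ∈ Metric.ball (F.f x) (2 * F.r x), DifferentiableAt ℝ (F.g x) z)) ∧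
    -- (A2)
    ((∀ y ∈ Metric.ball x (2 * F.r x),
        F.dS x ^ F.a ≤ |deriv F.f y| ∧ |deriv F.f y| ≤ F.dS x ^ (-F.a)) ∧
      (∀ z ∈ Metric.ball (F.f x) (2 * F.r x),
        F.dS x ^ F.a ≤ |deriv (F.g x) z| ∧ |deriv (F.g x) z| ≤ F.dS x ^ (-F.a))) ∧
    -- (A3)
    ((∀ y ∈ Metric.ball x (2 * F.r x), ∀ z ∈ Metric.ball x (2 * F.r x),
        |deriv F.f y - deriv F.f z| ≤ F.K * |y - z| ^ F.β) ∧
      (∀ y ∈ Metric.ball (F.f x) (2 * F.r x), ∀ z ∈ Metric.ball (F.f x) (2 * F.r x),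
        |deriv (F.g x) y - deriv (F.g x) z| ≤ F.K * |y - z| ^ F.β))

end GoodMap

/-- Membership in the natural extension space `M̂`. -/
def inMhat (f : ℝ → ℝ) (x : ℤ → ℝ) : Prop :=
  (∀ n, x n ∈ Mset) ∧ ∀ n : ℤ, f (x (n - 1)) = x n

/-- The natural extension map `f̂` (left shift). -/
def fhat (x : ℤ → ℝ) : ℤ → ℝ := fun n => x (n + 1)

/-- Iterate `f̂^k` of the natural extension map, `k ∈ ℤ`. -/
def fhatI (k : ℤ) (x : ℤ → ℝ) : ℤ → ℝ := fun n => x (n + k)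

/-- The metric `d̂(x̂,ŷ) = sup{2^n d(x_n,y_n) : n ≤ 0}` on `M̂`. -/
def dhat (x y : ℤ → ℝ) : ℝ :=
  sSup {t : ℝ | ∃ n : ℤ, n ≤ 0 ∧ t = (2:ℝ) ^ n * |x n - y n|}

/-- The invertible derivative cocycle `d̂f^{(n)}` over `f̂`. -/
def dfhat (f : ℝ → ℝ) (x : ℤ → ℝ) (n : ℤ) : ℝ :=
  if 0 ≤ n then ∏ j ∈ Finset.range n.toNat, deriv f (x (j : ℤ))
  else (∏ j ∈ Finset.range (-n).toNat, deriv f (x (-(j : ℤ) - 1)))⁻¹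

/-- The Pesin parameter `u(x̂)`. -/
def uPes (f : ℝ → ℝ) (χ : ℝ) (x : ℤ → ℝ) : ℝ :=
  Real.sqrt (∑' n : ℕ, Real.exp (2 * (n:ℝ) * χ) * (dfhat f x (-(n:ℤ))) ^ 2)

/-- The Pesin chart `Ψ_{x̂}(t) = t/u(x̂) + x₀`. -/
def Psi (f : ℝ → ℝ) (χ : ℝ) (x : ℤ → ℝ) (t : ℝ) : ℝ := t / uPes f χ x + x 0

/-- The set `NUE_χ`. -/
def NUE (F : GoodMap) (χ : ℝ) : Set (ℤ → ℝ) :=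
  {x | inMhat F.f x ∧ (∀ n, x n ∉ F.S) ∧
    (∃ l > χ, Tendsto (fun n : ℕ => Real.log |dfhat F.f x (n:ℤ)| / (n:ℝ)) atTop (𝓝 l)) ∧
    (∃ l > χ, Tendsto (fun n : ℕ => Real.log |dfhat F.f x (-(n:ℤ))| / (-(n:ℝ))) atTop (𝓝 l))}

/-- `ρ(x̂) = d({x₋₁,x₀,x₁}, S)`. -/
def rho (F : GoodMap) (x : ℤ → ℝ) : ℝ :=
  min (F.dS (x (-1))) (min (F.dS (x 0)) (F.dS (x 1)))

/-- `I_ε = {e^{-εn/3} : n ≥ 0}`. -/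
def Ieps (ε : ℝ) : Set ℝ := {q | ∃ n : ℕ, q = Real.exp (-(ε * n) / 3)}

/-- `Q̃_ε(x̂)`. -/
def Qtilde (F : GoodMap) (χ ε : ℝ) (x : ℤ → ℝ) : ℝ :=
  ε ^ (3 / F.β) *
    min (uPes F.f χ x ^ (-(24 / F.β)))
      (uPes F.f χ (fhatI (-1) x) ^ (-(12 / F.β)) * rho F x ^ (72 * F.a / F.β))

/-- `Q_ε(x̂) = max{q ∈ I_ε : q ≤ Q̃_ε(x̂)}`. -/
def Qeps (F : GoodMap) (χ ε : ℝ) (x : ℤ → ℝ) : ℝ :=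
  sSup {q | q ∈ Ieps ε ∧ q ≤ Qtilde F χ ε x}

/-- The regular set. -/
def Reg (F : GoodMap) : Set (ℤ → ℝ) :=
  {x | inMhat F.f x ∧ (∀ n, x n ∉ F.S) ∧
    Tendsto (fun n : ℕ => Real.log (F.dS (x (n:ℤ))) / (n:ℝ)) atTop (𝓝 0) ∧
    Tendsto (fun n : ℕ => Real.log (F.dS (x (-(n:ℤ)))) / (n:ℝ)) atTop (𝓝 0)}

/-- The set `NUE*_χ`. -/
def NUEstar (F : GoodMap) (χ : ℝ) : Set (ℤ → ℝ) :=
  {x | x ∈ NUE F χ ∧ x ∈ Reg F ∧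
    (∃ nk : ℕ → ℤ, Tendsto nk atTop atBot ∧
      Tendsto (fun k => uPes F.f χ (fhatI (nk k) x)) atTop (𝓝 (uPes F.f χ x))) ∧
    Tendsto (fun n : ℕ => Real.log (uPes F.f χ (fhatI (-(n:ℤ)) x)) / (-(n:ℝ))) atTop (𝓝 0)}

/-- An ε-chart is a pair `(x̂, p)`, representing `Ψ_{x̂}` restricted to `[-p,p]`. -/
structure Chart where
  x : ℤ → ℝ
  p : ℝ

/-- `(x̂, p)` is a genuine ε-chart. -/
def IsChart (F : GoodMap) (χ ε : ℝ) (c : Chart) : Prop :=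
  c.x ∈ NUE F χ ∧ 0 < c.p ∧ c.p ≤ Qeps F χ ε c.x

/-- ε-overlap of two ε-charts. -/
def Overlap (F : GoodMap) (χ ε : ℝ) (c₁ c₂ : Chart) : Prop :=
  Real.exp (-ε) ≤ c₁.p / c₂.p ∧ c₁.p / c₂.p ≤ Real.exp ε ∧
  |c₁.x 0 - c₂.x 0| + |(uPes F.f χ c₁.x)⁻¹ - (uPes F.f χ c₂.x)⁻¹| < (c₁.p * c₂.p) ^ 4

/-- `g_{x̂} = g_{x₋₁}`, the inverse branch of `f` taking `x₀` to `x₋₁`. -/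
def ghat (F : GoodMap) (x : ℤ → ℝ) : ℝ → ℝ := F.g (x (-1))

/-- `G_{x̂} = Ψ_{f̂⁻¹x̂}⁻¹ ∘ g_{x̂} ∘ Ψ_{x̂}`. -/
def Gmap (F : GoodMap) (χ : ℝ) (x : ℤ → ℝ) (t : ℝ) : ℝ :=
  uPes F.f χ (fhatI (-1) x) * (ghat F x (Psi F.f χ x t) - x (-1))

/-- `G_{x̂,ŷ} = Ψ_{ŷ}⁻¹ ∘ g_{x̂} ∘ Ψ_{x̂}`. -/
def Gmap2 (F : GoodMap) (χ : ℝ) (x y : ℤ → ℝ) (t : ℝ) : ℝ :=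
  uPes F.f χ y * (ghat F x (Psi F.f χ x t) - y 0)

/-- `F_{x̂} = Ψ_{f̂x̂}⁻¹ ∘ f ∘ Ψ_{x̂}`. -/
def Fmap (F : GoodMap) (χ : ℝ) (x : ℤ → ℝ) (t : ℝ) : ℝ :=
  uPes F.f χ (fhat x) * (F.f (Psi F.f χ x t) - x 1)

/-- `δ_ε = e^{-εn}` where `n` is the unique positive integer with `e^{-εn} < ε ≤ e^{-ε(n-1)}`. -/
def deltaEps (ε : ℝ) : ℝ :=
  Real.exp (-(ε * ((⌊Real.log (1 / ε) / ε⌋ + 1 : ℤ) : ℝ)))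

/-- Weak edge `v ⤎ w` (from `w = Ψ_{x̂}^p` to `v = Ψ_{ŷ}^q`). -/
def WeakEdge (F : GoodMap) (χ ε : ℝ) (v w : Chart) : Prop :=
  IsChart F χ ε v ∧ IsChart F χ ε w ∧
  Overlap F χ ε ⟨fhatI (-1) w.x, v.p⟩ v ∧
  w.p ≤ Real.exp ε * v.p

/-- Edge `v ← w` (from `w = Ψ_{x̂}^p` to `v = Ψ_{ŷ}^q`). -/
def Edge (F : GoodMap) (χ ε : ℝ) (v w : Chart) : Prop :=
  IsChart F χ ε v ∧ IsChart F χ ε w ∧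
  Overlap F χ ε ⟨fhatI (-1) w.x, v.p⟩ v ∧
  |v.x 1 - w.x 0| < v.p ∧
  Real.exp (-v.p) ≤ uPes F.f χ (fhat v.x) / uPes F.f χ w.x ∧
  uPes F.f χ (fhat v.x) / uPes F.f χ w.x ≤ Real.exp v.p ∧
  w.p = min (Real.exp ε * v.p) (deltaEps ε * Qeps F χ ε w.x)

/-- ε-generalized pseudo-orbit. -/
def IsGPO (F : GoodMap) (χ ε : ℝ) (v : ℤ → Chart) : Prop :=
  ∀ n : ℤ, Edge F χ ε (v n) (v (n + 1))

/-- weak ε-generalized pseudo-orbit. -/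
def IsWeakGPO (F : GoodMap) (χ ε : ℝ) (v : ℤ → Chart) : Prop :=
  ∀ n : ℤ, WeakEdge F χ ε (v n) (v (n + 1))

/-- The range `Ψ_{x̂}([-p,p])` of an ε-chart. -/
def chartRange (F : GoodMap) (χ : ℝ) (c : Chart) : Set ℝ :=
  Psi F.f χ c.x '' Set.Icc (-c.p) c.p

/-- A bi-infinite sequence of ε-charts shadows `x̂ ∈ M̂`. -/
def Shadows (F : GoodMap) (χ : ℝ) (v : ℤ → Chart) (x : ℤ → ℝ) : Prop :=
  inMhat F.f x ∧ ∀ n : ℤ, x n ∈ chartRange F χ (v n)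

/-- `q_ε(x̂) = δ_ε inf{e^{ε|m|} Q_ε(f̂^m x̂) : m ≤ 0}`. -/
def qeps (F : GoodMap) (χ ε : ℝ) (x : ℤ → ℝ) : ℝ :=
  deltaEps ε *
    sInf {t : ℝ | ∃ m : ℤ, m ≤ 0 ∧ t = Real.exp (ε * |(m:ℝ)|) * Qeps F χ ε (fhatI m x)}

/-- Recurrence: some symbol repeats infinitely often in the future and some in the past. -/
def Recurrent {V : Type*} (v : ℤ → V) : Prop :=
  (∃ c, {n : ℤ | 0 < n ∧ v n = c}.Infinite) ∧ ∃ c, {n : ℤ | n < 0 ∧ v n = c}.Infinite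

/-- The distance `d(v,w) = exp(-min{|n| : v_n ≠ w_n})` on sequence spaces. -/
def dSigma {V : Type*} (v w : ℤ → V) : ℝ :=
  sSup {t : ℝ | ∃ n : ℤ, v n ≠ w n ∧ t = Real.exp (-|(n:ℝ)|)}

/-- Sup norm over a set. -/
def supNorm (h : ℝ → ℝ) (I : Set ℝ) : ℝ := sSup ((fun t => |h t|) '' I)

/-- Hölder constant over a set. -/
def holConst (γ : ℝ) (h : ℝ → ℝ) (I : Set ℝ) : ℝ :=
  sSup {r : ℝ | ∃ t ∈ I, ∃ s ∈ I, t ≠ s ∧ r = |h t - h s| / |t - s| ^ γ}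

/-! One step back along a weak edge from `w` to `v` contracts distances between points of
`Ψ_v([-p, p])`, measured in the chart scale `u · |y - z|`, by `e^{-χ/2}`:

* telescoping the series defining `u` gives `e^χ u(f̂⁻¹ŵ) ≤ |df_{w₋₁}| u(ŵ)`;
* the chart size is so small compared with `u` and `ρ` that (A3) turns into a relative distortion
  bound: on the chart, `|df|` varies at most by the factor `1 - ε`;
* the overlap condition gives `u(v̂) ≤ (1 + ε) u(f̂⁻¹ŵ)`.

The mean value theorem loses the factor `(1 - ε) / (1 + ε)`, which is at least `e^{-χ/2}` for
small `ε`. Iterating, and using `u ≥ 1`, gives the exponential contraction. -/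

section RealLemmas

lemma mul_abs_sub_le_abs_image_sub {f : ℝ → ℝ} {s : Set ℝ} (hs : Convex ℝ s)
    (hf : ContinuousOn f s) (hf' : DifferentiableOn ℝ f (interior s)) {m : ℝ}
    (hm : ∀ t ∈ interior s, m ≤ |deriv f t|) {y z : ℝ} (hy : y ∈ s) (hz : z ∈ s) :
    m * |y - z| ≤ |f y - f z| := by
  wlog h : y < z generalizing y z
  · rcases (not_lt.1 h).eq_or_lt with rfl | hzy
    · simp
    · rw [abs_sub_comm y, abs_sub_comm (f y)]
      exact this hz hy hzy
  have hIcc : Icc y z ⊆ s := hs.ordConnected.out hy hz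
  have hIoo : Ioo y z ⊆ interior s :=
    isOpen_Ioo.subset_interior_iff.2 (Ioo_subset_Icc_self.trans hIcc)
  obtain ⟨ξ, hξ, hslope⟩ := exists_deriv_eq_slope f h (hf.mono hIcc) (hf'.mono hIoo)
  have hle : m ≤ |f z - f y| / |z - y| := by
    rw [← abs_div, ← hslope]
    exact hm ξ (hIoo hξ)
  rw [abs_sub_comm y, abs_sub_comm (f y)]
  exact (le_div_iff₀ (abs_pos.2 (sub_ne_zero.2 h.ne'))).1 hle

lemma summable_exp_mul_sq_of_tendsto_log_div {d : ℕ → ℝ} {χ l : ℝ} (hl : χ < l)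
    (hd : Tendsto (fun n : ℕ => log |d n| / (-(n : ℝ))) atTop (𝓝 l)) :
    Summable fun n : ℕ => exp (2 * (n : ℝ) * χ) * d n ^ 2 := by
  obtain ⟨c, hχc, hcl⟩ := exists_between hl
  have hgeom : Summable fun n : ℕ => exp (n * (2 * (χ - c))) :=
    summable_exp_nat_mul_iff.2 (by linarith)
  refine hgeom.of_norm_bounded_eventually_nat ?_
  filter_upwards [hd.eventually_const_lt hcl, eventually_gt_atTop 0] with n hn hn0
  have hlog : log |d n| ≤ -(c * n) := by
    rw [div_neg, lt_neg, div_lt_iff₀ (Nat.cast_pos.2 hn0)] at hn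
    linarith
  have hdn : |d n| ≤ exp (-(c * n)) := (le_exp_log _).trans (exp_le_exp.2 hlog)
  rw [norm_of_nonneg (by positivity), ← sq_abs]
  calc exp (2 * (n : ℝ) * χ) * |d n| ^ 2
      ≤ exp (2 * (n : ℝ) * χ) * exp (-(c * n)) ^ 2 := by gcongr
    _ = exp (n * (2 * (χ - c))) := by
        rw [← exp_nat_mul, ← exp_add]
        congr 1
        push_cast
        ring

lemma le_one_add_mul_of_abs_inv_sub_inv_le {u u' q ε : ℝ} (hu : 0 < u) (hu' : 0 < u')
    (hq : |u'⁻¹ - u⁻¹| ≤ q) (huq : u * q ≤ ε) : u ≤ (1 + ε) * u' := by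
  have hinv : u'⁻¹ ≤ u⁻¹ + q := by linarith [le_of_abs_le hq]
  rw [← div_le_iff₀ hu', div_eq_mul_inv]
  calc u * u'⁻¹ ≤ u * (u⁻¹ + q) := by gcongr
    _ = 1 + u * q := by rw [mul_add, mul_inv_cancel₀ hu.ne']
    _ ≤ 1 + ε := by gcongr

lemma one_add_le_exp_half_mul_one_sub {χ ε : ℝ} (hε : ε ≤ 1) (hεχ : ε * (4 + χ) ≤ χ) :
    1 + ε ≤ exp (χ / 2) * (1 - ε) := by
  calc 1 + ε ≤ (χ / 2 + 1) * (1 - ε) := by linarith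
    _ ≤ exp (χ / 2) * (1 - ε) :=
        mul_le_mul_of_nonneg_right (add_one_le_exp _) (sub_nonneg.2 hε)

end RealLemmas

section PesinParameter

variable {f : ℝ → ℝ} {χ : ℝ} {x : ℤ → ℝ}

lemma dfhat_neg_natCast (f : ℝ → ℝ) (x : ℤ → ℝ) (n : ℕ) :
    dfhat f x (-(n : ℤ)) = (∏ j ∈ Finset.range n, deriv f (x (-(j : ℤ) - 1)))⁻¹ := by
  rcases n.eq_zero_or_pos with rfl | hn
  · simp [dfhat]
  · rw [dfhat, if_neg (by omega)]
    simp

lemma dfhat_neg_succ (f : ℝ → ℝ) (x : ℤ → ℝ) (n : ℕ) :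
    dfhat f x (-((n + 1 : ℕ) : ℤ)) =
      (deriv f (x (-1)))⁻¹ * dfhat f (fhatI (-1) x) (-(n : ℤ)) := by
  have hindex (j : ℕ) : -((j + 1 : ℕ) : ℤ) - 1 = -(j : ℤ) - 1 + -1 := by
    push_cast
    ring
  rw [dfhat_neg_natCast, dfhat_neg_natCast, Finset.prod_range_succ', mul_inv, mul_comm]
  simp only [fhatI, hindex, Nat.cast_zero, neg_zero, zero_sub]

/-- The `n`-th term `e^{2nχ} |d̂f^{(-n)}|²` of the series defining `u(x̂)²`. -/
def pesinTerm (f : ℝ → ℝ) (χ : ℝ) (x : ℤ → ℝ) (n : ℕ) : ℝ :=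
  exp (2 * (n : ℝ) * χ) * dfhat f x (-(n : ℤ)) ^ 2

lemma pesinTerm_nonneg (f : ℝ → ℝ) (χ : ℝ) (x : ℤ → ℝ) (n : ℕ) : 0 ≤ pesinTerm f χ x n := by
  unfold pesinTerm
  positivity

lemma pesinTerm_zero (f : ℝ → ℝ) (χ : ℝ) (x : ℤ → ℝ) : pesinTerm f χ x 0 = 1 := by
  simp [pesinTerm, dfhat]

lemma pesinTerm_succ (f : ℝ → ℝ) (χ : ℝ) (x : ℤ → ℝ) (n : ℕ) :
    pesinTerm f χ x (n + 1) =
      (exp χ / deriv f (x (-1))) ^ 2 * pesinTerm f χ (fhatI (-1) x) n := by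
  have hexp : exp (2 * ((n + 1 : ℕ) : ℝ) * χ) = exp χ ^ 2 * exp (2 * (n : ℝ) * χ) := by
    rw [← exp_nat_mul, ← exp_add]
    congr 1
    push_cast
    ring
  rw [pesinTerm, pesinTerm, dfhat_neg_succ, hexp]
  ring

lemma summable_pesinTerm_fhatI_neg_one (hx : Summable (pesinTerm f χ x))
    (hd : deriv f (x (-1)) ≠ 0) : Summable (pesinTerm f χ (fhatI (-1) x)) := by
  have hsucc : Summable fun n => pesinTerm f χ x (n + 1) := (summable_nat_add_iff 1).2 hx
  simp only [pesinTerm_succ] at hsucc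
  exact (summable_mul_left_iff (pow_ne_zero 2 (div_ne_zero (exp_ne_zero χ) hd))).1 hsucc

lemma uPes_nonneg (f : ℝ → ℝ) (χ : ℝ) (x : ℤ → ℝ) : 0 ≤ uPes f χ x := sqrt_nonneg _

lemma uPes_sq (f : ℝ → ℝ) (χ : ℝ) (x : ℤ → ℝ) : uPes f χ x ^ 2 = ∑' n, pesinTerm f χ x n :=
  sq_sqrt (tsum_nonneg (pesinTerm_nonneg f χ x))

lemma uPes_sq_eq_one_add (hx : Summable (pesinTerm f χ x)) :
    uPes f χ x ^ 2 = 1 + (exp χ / deriv f (x (-1)) * uPes f χ (fhatI (-1) x)) ^ 2 := by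
  simp only [mul_pow, uPes_sq, hx.tsum_eq_zero_add, pesinTerm_zero, pesinTerm_succ, tsum_mul_left]

lemma one_le_uPes (hx : Summable (pesinTerm f χ x)) : 1 ≤ uPes f χ x := by
  rw [← one_le_sq_iff₀ (uPes_nonneg f χ x), uPes_sq_eq_one_add hx]
  exact le_add_of_nonneg_right (sq_nonneg _)

lemma exp_mul_uPes_fhatI_neg_one_le (hx : Summable (pesinTerm f χ x))
    (hd : deriv f (x (-1)) ≠ 0) :
    exp χ * uPes f χ (fhatI (-1) x) ≤ |deriv f (x (-1))| * uPes f χ x := by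
  have hsq : (exp χ / deriv f (x (-1)) * uPes f χ (fhatI (-1) x)) ^ 2 ≤ uPes f χ x ^ 2 := by
    rw [uPes_sq_eq_one_add hx]
    exact le_add_of_nonneg_left zero_le_one
  have habs := abs_le_of_sq_le_sq hsq (uPes_nonneg f χ x)
  rwa [div_mul_eq_mul_div, abs_div, abs_of_nonneg (mul_nonneg (exp_pos χ).le (uPes_nonneg ..)),
    div_le_iff₀' (abs_pos.2 hd)] at habs

end PesinParameter

section SingularSet

variable {F : GoodMap} {χ : ℝ}

lemma S_subset_Mset (F : GoodMap) : F.S ⊆ Mset :=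
  union_subset (fun _ hx => hx.1.1) F.hD

lemma deriv_ne_zero_of_notMem_S {x : ℝ} (hx : x ∈ Mset) (hxS : x ∉ F.S) : deriv F.f x ≠ 0 :=
  fun h => hxS (or_iff_not_imp_right.2 fun hD => ⟨⟨hx, hD⟩, h⟩)

lemma dS_nonneg (F : GoodMap) (x : ℝ) : 0 ≤ F.dS x := infDist_nonneg

lemma dS_le_one {x : ℝ} (hx : x ∈ Mset) : F.dS x ≤ 1 := by
  rcases F.S.eq_empty_or_nonempty with hS | ⟨s, hs⟩
  · simp [GoodMap.dS, hS]
  · calc F.dS x ≤ dist x s := infDist_le_dist_of_mem hs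
      _ ≤ 1 / 2 - 0 := Real.dist_le_of_mem_Icc hx (S_subset_Mset F hs)
      _ ≤ 1 := by norm_num

lemma rho_nonneg (F : GoodMap) (x : ℤ → ℝ) : 0 ≤ rho F x :=
  le_min (dS_nonneg _ _) (le_min (dS_nonneg _ _) (dS_nonneg _ _))

lemma rho_le_dS_zero (F : GoodMap) (x : ℤ → ℝ) : rho F x ≤ F.dS (x 0) :=
  (min_le_right _ _).trans (min_le_left _ _)

lemma rho_le_dS_one (F : GoodMap) (x : ℤ → ℝ) : rho F x ≤ F.dS (x 1) :=
  (min_le_right _ _).trans (min_le_right _ _)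

lemma rho_le_one {x : ℤ → ℝ} (hx : x 0 ∈ Mset) : rho F x ≤ 1 :=
  (rho_le_dS_zero F x).trans (dS_le_one hx)

variable {x : ℤ → ℝ}

lemma f_apply_zero (hx : inMhat F.f x) : F.f (x 0) = x 1 := hx.2 1

lemma rho_rpow_lt_r (hA : F.SatA) (hx : inMhat F.f x) (hxS : ∀ n, x n ∉ F.S) :
    rho F x ^ F.a < F.r (x 0) := by
  have hf := f_apply_zero hx
  have ha : 0 ≤ F.a := zero_le_one.trans F.ha.le
  refine lt_of_le_of_lt (le_min ?_ ?_)
    (hA (x 0) (hx.1 0) (hxS 0) (hf ▸ hxS 1)).1.1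
  · exact rpow_le_rpow (rho_nonneg F x) (rho_le_dS_zero F x) ha
  · exact rpow_le_rpow (rho_nonneg F x) (hf ▸ rho_le_dS_one F x) ha

lemma deriv_neg_one_ne_zero_of_mem_NUE (hx : x ∈ NUE F χ) : deriv F.f (x (-1)) ≠ 0 :=
  deriv_ne_zero_of_notMem_S (hx.1.1 _) (hx.2.1 _)

lemma summable_pesinTerm_of_mem_NUE (hx : x ∈ NUE F χ) : Summable (pesinTerm F.f χ x) := by
  obtain ⟨-, -, -, l, hl, hlim⟩ := hx
  exact summable_exp_mul_sq_of_tendsto_log_div hl hlim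

end SingularSet

section Charts

variable {F : GoodMap} {χ ε : ℝ} {c : Chart}

lemma le_one_of_mul_two_mul_K_le_one (hε0 : 0 ≤ ε) (hεK : ε * (2 * F.K) ≤ 1) : ε ≤ 1 := by
  nlinarith [F.hK]

lemma Qtilde_nonneg (F : GoodMap) (χ : ℝ) (hε : 0 ≤ ε) (x : ℤ → ℝ) : 0 ≤ Qtilde F χ ε x := by
  have hu := uPes_nonneg F.f χ x
  have hu' := uPes_nonneg F.f χ (fhatI (-1) x)
  have hρ := rho_nonneg F x
  exact mul_nonneg (by positivity) (le_min (by positivity) (by positivity))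

lemma Qeps_le_Qtilde (F : GoodMap) (χ : ℝ) (hε : 0 ≤ ε) (x : ℤ → ℝ) :
    Qeps F χ ε x ≤ Qtilde F χ ε x :=
  Real.sSup_le (fun _ hq => hq.2) (Qtilde_nonneg F χ hε x)

lemma IsChart.one_le_uPes (hc : IsChart F χ ε c) : 1 ≤ uPes F.f χ c.x :=
  OneDim.one_le_uPes (summable_pesinTerm_of_mem_NUE hc.1)

lemma IsChart.one_le_uPes_fhatI_neg_one (hc : IsChart F χ ε c) :
    1 ≤ uPes F.f χ (fhatI (-1) c.x) :=
  OneDim.one_le_uPes (summable_pesinTerm_fhatI_neg_one (summable_pesinTerm_of_mem_NUE hc.1)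
    (deriv_neg_one_ne_zero_of_mem_NUE hc.1))

lemma IsChart.p_le_mul_uPes_rpow (hc : IsChart F χ ε c) (hε : 0 ≤ ε) :
    c.p ≤ ε ^ (3 / F.β) * uPes F.f χ c.x ^ (-(24 / F.β)) :=
  (hc.2.2.trans (Qeps_le_Qtilde F χ hε c.x)).trans
    (mul_le_mul_of_nonneg_left (min_le_left _ _) (by positivity))

lemma IsChart.p_le_mul_rho_rpow (hc : IsChart F χ ε c) (hε : 0 ≤ ε) :
    c.p ≤ ε ^ (3 / F.β) * rho F c.x ^ (72 * F.a / F.β) := by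
  have hβ := F.hβ0
  have hρ := rho_nonneg F c.x
  have hu : uPes F.f χ (fhatI (-1) c.x) ^ (-(12 / F.β)) ≤ 1 :=
    rpow_le_one_of_one_le_of_nonpos hc.one_le_uPes_fhatI_neg_one
      (neg_nonpos.2 (by positivity))
  refine (hc.2.2.trans (Qeps_le_Qtilde F χ hε c.x)).trans
    (mul_le_mul_of_nonneg_left ?_ (by positivity))
  exact (min_le_right _ _).trans (mul_le_of_le_one_left (by positivity) hu)

lemma IsChart.uPes_mul_p_le (hc : IsChart F χ ε c) (hε0 : 0 ≤ ε) (hε1 : ε ≤ 1) :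
    uPes F.f χ c.x * c.p ≤ ε := by
  have hβ0 := F.hβ0
  have hβ1 := F.hβ1
  have hu1 := hc.one_le_uPes
  have hε : ε ^ (3 / F.β) ≤ ε :=
    rpow_le_self_of_le_one hε0 hε1 (by rw [le_div_iff₀ hβ0]; linarith)
  have hu : uPes F.f χ c.x ^ (-(24 / F.β)) ≤ (uPes F.f χ c.x)⁻¹ := by
    rw [← rpow_neg_one]
    refine rpow_le_rpow_of_exponent_le hu1 (neg_le_neg ?_)
    rw [le_div_iff₀ hβ0]
    linarith
  rw [← le_div_iff₀' (by linarith), div_eq_mul_inv]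
  exact (hc.p_le_mul_uPes_rpow hε0).trans (by gcongr)

lemma IsChart.p_le_one (hc : IsChart F χ ε c) (hε0 : 0 ≤ ε) (hε1 : ε ≤ 1) : c.p ≤ 1 :=
  calc c.p ≤ uPes F.f χ c.x * c.p := le_mul_of_one_le_left hc.2.1.le hc.one_le_uPes
    _ ≤ ε := hc.uPes_mul_p_le hε0 hε1
    _ ≤ 1 := hε1

lemma IsChart.p_rpow_le (hc : IsChart F χ ε c) (hε : 0 ≤ ε) :
    c.p ^ F.β ≤ ε ^ 3 * rho F c.x ^ F.a := by
  have hβ := F.hβ0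
  have ha := F.ha
  have hρ := rho_nonneg F c.x
  calc c.p ^ F.β ≤ (ε ^ (3 / F.β) * rho F c.x ^ (72 * F.a / F.β)) ^ F.β :=
        rpow_le_rpow hc.2.1.le (hc.p_le_mul_rho_rpow hε) hβ.le
    _ = ε ^ 3 * rho F c.x ^ (72 * F.a) := by
        rw [mul_rpow (by positivity) (by positivity), ← rpow_mul hε, ← rpow_mul hρ,
          div_mul_cancel₀ _ hβ.ne', div_mul_cancel₀ _ hβ.ne']
        norm_cast
    _ ≤ ε ^ 3 * rho F c.x ^ F.a := by
        gcongr ?_ * ?_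
        exact rpow_le_rpow_of_exponent_ge' hρ (rho_le_one (hc.1.1.1 0)) (by linarith)
          (by linarith)

lemma IsChart.closedBall_subset_ball (hA : F.SatA) (hc : IsChart F χ ε c) (hε0 : 0 ≤ ε)
    (hε1 : ε ≤ 1) : closedBall (c.x 0) c.p ⊆ ball (c.x 0) (2 * F.r (c.x 0)) := by
  have hρ : 0 ≤ rho F c.x ^ F.a := rpow_nonneg (rho_nonneg F c.x) _
  have hpr : c.p < F.r (c.x 0) :=
    calc c.p ≤ c.p ^ F.β :=
          self_le_rpow_of_le_one hc.2.1.le (hc.p_le_one hε0 hε1) F.hβ1.le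
      _ ≤ ε ^ 3 * rho F c.x ^ F.a := hc.p_rpow_le hε0
      _ ≤ rho F c.x ^ F.a := mul_le_of_le_one_left hρ (pow_le_one₀ hε0 hε1)
      _ < F.r (c.x 0) := rho_rpow_lt_r hA hc.1.1 hc.1.2.1
  exact Metric.closedBall_subset_ball (by linarith [hc.2.1])

lemma uPes_mul_abs_sub_center_le {y : ℝ} (hu : 0 < uPes F.f χ c.x)
    (hy : y ∈ chartRange F χ c) : uPes F.f χ c.x * |y - c.x 0| ≤ c.p := by
  obtain ⟨t, ht, rfl⟩ := hy
  rw [Psi, add_sub_cancel_right, abs_div, abs_of_pos hu, mul_div_cancel₀ _ hu.ne']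
  exact abs_le.2 ht

lemma uPes_mul_abs_sub_le_two_mul {y z : ℝ} (hu : 0 < uPes F.f χ c.x)
    (hy : y ∈ chartRange F χ c) (hz : z ∈ chartRange F χ c) :
    uPes F.f χ c.x * |y - z| ≤ 2 * c.p := by
  calc uPes F.f χ c.x * |y - z|
      ≤ uPes F.f χ c.x * (|y - c.x 0| + |z - c.x 0|) := by
        rw [abs_sub_comm z]
        gcongr
        exact abs_sub_le _ _ _
    _ ≤ 2 * c.p := by
        linarith [uPes_mul_abs_sub_center_le hu hy, uPes_mul_abs_sub_center_le hu hz]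

lemma IsChart.chartRange_subset_closedBall (hc : IsChart F χ ε c) :
    chartRange F χ c ⊆ closedBall (c.x 0) c.p := by
  intro y hy
  have hu := hc.one_le_uPes
  rw [mem_closedBall, Real.dist_eq]
  exact (le_mul_of_one_le_left (abs_nonneg _) hu).trans
    (uPes_mul_abs_sub_center_le (by linarith) hy)

lemma IsChart.one_sub_mul_abs_deriv_le (hA : F.SatA) (hc : IsChart F χ ε c) (hε0 : 0 ≤ ε)
    (hεK : ε * (2 * F.K) ≤ 1) {x t : ℝ} (hx : x ∈ closedBall (c.x 0) c.p)
    (ht : t ∈ closedBall (c.x 0) c.p) : (1 - ε) * |deriv F.f x| ≤ |deriv F.f t| := by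
  have hε1 := le_one_of_mul_two_mul_K_le_one hε0 hεK
  have hsub := hc.closedBall_subset_ball hA hε0 hε1
  have hβ0 := F.hβ0
  have hK := F.hK
  have hp := hc.2.1.le
  have hρ := rho_nonneg F c.x
  obtain ⟨-, -, ⟨hA2, -⟩, hA3, -⟩ :=
    hA (c.x 0) (hc.1.1.1 0) (hc.1.2.1 0) (f_apply_zero hc.1.1 ▸ hc.1.2.1 1)
  have hρx : rho F c.x ^ F.a ≤ |deriv F.f x| :=
    (rpow_le_rpow hρ (rho_le_dS_zero F c.x) (zero_le_one.trans F.ha.le)).trans (hA2 x (hsub hx)).1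
  have hxt : |x - t| ≤ 2 * c.p := by
    rw [two_mul]
    exact (dist_triangle_right x t (c.x 0)).trans (add_le_add hx ht)
  have hosc : |deriv F.f x - deriv F.f t| ≤ ε * |deriv F.f x| :=
    calc |deriv F.f x - deriv F.f t| ≤ F.K * |x - t| ^ F.β := hA3 x (hsub hx) t (hsub ht)
      _ ≤ F.K * (2 * c.p) ^ F.β := by gcongr
      _ ≤ F.K * (2 * c.p ^ F.β) := by
        rw [mul_rpow zero_le_two hp]
        gcongr
        exact rpow_le_self_of_one_le one_le_two F.hβ1.le
      _ ≤ F.K * (2 * (ε ^ 3 * rho F c.x ^ F.a)) := by gcongr; exact hc.p_rpow_le hε0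
      _ = (ε * (2 * F.K)) * (ε * (ε * rho F c.x ^ F.a)) := by ring
      _ ≤ 1 * (1 * (ε * |deriv F.f x|)) := by gcongr
      _ = ε * |deriv F.f x| := by ring
  linarith [abs_sub_abs_le_abs_sub (deriv F.f x) (deriv F.f t)]

lemma IsChart.one_sub_mul_abs_deriv_mul_abs_sub_le (hA : F.SatA) (hc : IsChart F χ ε c)
    (hε0 : 0 ≤ ε) (hεK : ε * (2 * F.K) ≤ 1) {x y z : ℝ}
    (hx : x ∈ closedBall (c.x 0) c.p) (hy : y ∈ closedBall (c.x 0) c.p)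
    (hz : z ∈ closedBall (c.x 0) c.p) :
    (1 - ε) * |deriv F.f x| * |y - z| ≤ |F.f y - F.f z| := by
  have hsub := hc.closedBall_subset_ball hA hε0 (le_one_of_mul_two_mul_K_le_one hε0 hεK)
  have hdiff : ∀ t ∈ closedBall (c.x 0) c.p, DifferentiableAt ℝ F.f t := fun t ht =>
    (hA (c.x 0) (hc.1.1.1 0) (hc.1.2.1 0)
      (f_apply_zero hc.1.1 ▸ hc.1.2.1 1)).2.1.2.1 t (hsub ht)
  exact mul_abs_sub_le_abs_image_sub (convex_closedBall _ _)
    (fun t ht => (hdiff t ht).continuousAt.continuousWithinAt)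
    (fun t ht => (hdiff t (interior_subset ht)).differentiableWithinAt)
    (fun t ht => hc.one_sub_mul_abs_deriv_le hA hε0 hεK hx (interior_subset ht)) hy hz

end Charts

section Contraction

variable {F : GoodMap} {χ ε : ℝ}

lemma WeakEdge.abs_sub_add_abs_inv_sub_inv_le {v w : Chart} (h : WeakEdge F χ ε v w)
    (hε0 : 0 ≤ ε) (hε1 : ε ≤ 1) :
    |w.x (-1) - v.x 0| + |(uPes F.f χ (fhatI (-1) w.x))⁻¹ - (uPes F.f χ v.x)⁻¹| ≤ v.p := by
  obtain ⟨hv, -, ⟨-, -, hov⟩, -⟩ := h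
  calc _ ≤ (v.p * v.p) ^ 4 := by simpa [fhatI] using hov.le
    _ = v.p ^ 7 * v.p := by ring
    _ ≤ v.p := mul_le_of_le_one_left hv.2.1.le (pow_le_one₀ hv.2.1.le (hv.p_le_one hε0 hε1))

lemma WeakEdge.uPes_mul_abs_sub_le (hA : F.SatA) {v w : Chart} (h : WeakEdge F χ ε v w)
    (hε0 : 0 ≤ ε) (hεK : ε * (2 * F.K) ≤ 1) (hεχ : ε * (4 + χ) ≤ χ) {y z : ℝ}
    (hy : y ∈ chartRange F χ v) (hz : z ∈ chartRange F χ v) :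
    uPes F.f χ v.x * |y - z| ≤ exp (-(χ / 2)) * (uPes F.f χ w.x * |F.f y - F.f z|) := by
  have hε1 := le_one_of_mul_two_mul_K_le_one hε0 hεK
  have hov := h.abs_sub_add_abs_inv_sub_inv_le hε0 hε1
  obtain ⟨hv, hw, -, -⟩ := h
  set u := uPes F.f χ v.x
  set u' := uPes F.f χ (fhatI (-1) w.x)
  set U := uPes F.f χ w.x
  set d := |deriv F.f (w.x (-1))|
  have hu : 1 ≤ u := hv.one_le_uPes
  have hu' : 1 ≤ u' := hw.one_le_uPes_fhatI_neg_one
  have hU : 1 ≤ U := hw.one_le_uPes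
  have hparam : u ≤ (1 + ε) * u' :=
    le_one_add_mul_of_abs_inv_sub_inv_le (by linarith) (by linarith)
      (by linarith [abs_nonneg (w.x (-1) - v.x 0)]) (hv.uPes_mul_p_le hε0 hε1)
  have hrec : exp χ * u' ≤ d * U :=
    exp_mul_uPes_fhatI_neg_one_le (summable_pesinTerm_of_mem_NUE hw.1)
      (deriv_neg_one_ne_zero_of_mem_NUE hw.1)
  have hcenter : w.x (-1) ∈ closedBall (v.x 0) v.p := by
    rw [mem_closedBall, Real.dist_eq]
    linarith [abs_nonneg (u'⁻¹ - u⁻¹)]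
  have hexpand : (1 - ε) * d * |y - z| ≤ |F.f y - F.f z| :=
    hv.one_sub_mul_abs_deriv_mul_abs_sub_le hA hε0 hεK hcenter
      (hv.chartRange_subset_closedBall hy) (hv.chartRange_subset_closedBall hz)
  calc u * |y - z| ≤ (1 + ε) * u' * |y - z| := by gcongr
    _ ≤ exp (χ / 2) * (1 - ε) * u' * |y - z| := by
        gcongr
        exact one_add_le_exp_half_mul_one_sub hε1 hεχ
    _ = exp (-(χ / 2)) * ((1 - ε) * (exp χ * u') * |y - z|) := by
        rw [show exp (χ / 2) = exp (-(χ / 2)) * exp χ by rw [← exp_add]; congr 1; ring]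
        ring
    _ ≤ exp (-(χ / 2)) * ((1 - ε) * (d * U) * |y - z|) := by
        gcongr
    _ = exp (-(χ / 2)) * (U * ((1 - ε) * d * |y - z|)) := by ring
    _ ≤ exp (-(χ / 2)) * (U * |F.f y - F.f z|) := by gcongr

/-- Negative weak `ε`-generalized pseudo-orbits. Charts are indexed by all of `ℤ`, but only
those with index `n ≤ 0` are constrained. -/
def IsNegWeakGPO (F : GoodMap) (χ ε : ℝ) (v : ℤ → Chart) : Prop :=
  ∀ n : ℤ, n ≤ 0 → WeakEdge F χ ε (v (n - 1)) (v n)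

/-- The unstable set `V^u` of a negative sequence of charts, as a subset of `M̂`. -/
def unstableSet (F : GoodMap) (χ : ℝ) (v : ℤ → Chart) : Set (ℤ → ℝ) :=
  {x | inMhat F.f x ∧ ∀ n : ℤ, n ≤ 0 → x n ∈ chartRange F χ (v n)}

variable {v : ℤ → Chart} {y z : ℤ → ℝ}

lemma IsNegWeakGPO.uPes_mul_abs_sub_le (hA : F.SatA) (hv : IsNegWeakGPO F χ ε v)
    (hε0 : 0 ≤ ε) (hεK : ε * (2 * F.K) ≤ 1) (hεχ : ε * (4 + χ) ≤ χ)
    (hy : y ∈ unstableSet F χ v) (hz : z ∈ unstableSet F χ v) (n : ℤ) (hn : n ≤ 0) :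
    uPes F.f χ (v n).x * |y n - z n| ≤ 2 * (v 0).p * exp (χ * n / 2) := by
  induction n, hn using Int.leInductionDown with
  | base =>
    have hu := (hv 0 le_rfl).2.1.one_le_uPes
    simpa using uPes_mul_abs_sub_le_two_mul (by linarith) (hy.2 0 le_rfl) (hz.2 0 le_rfl)
  | pred n hn ih =>
    have hstep := (hv n hn).uPes_mul_abs_sub_le hA hε0 hεK hεχ
      (hy.2 (n - 1) (by omega)) (hz.2 (n - 1) (by omega))
    rw [hy.1.2, hz.1.2] at hstep
    calc uPes F.f χ (v (n - 1)).x * |y (n - 1) - z (n - 1)|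
        ≤ exp (-(χ / 2)) * (2 * (v 0).p * exp (χ * n / 2)) := hstep.trans (by gcongr)
      _ = 2 * (v 0).p * exp (χ * (n - 1 : ℤ) / 2) := by
        rw [mul_left_comm, ← exp_add]
        congr 2
        push_cast
        ring

lemma IsNegWeakGPO.abs_sub_le (hA : F.SatA) (hv : IsNegWeakGPO F χ ε v)
    (hε0 : 0 ≤ ε) (hεK : ε * (2 * F.K) ≤ 1) (hεχ : ε * (4 + χ) ≤ χ)
    (hy : y ∈ unstableSet F χ v) (hz : z ∈ unstableSet F χ v) (n : ℤ) (hn : n ≤ 0) :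
    |y n - z n| ≤ 2 * (v 0).p * exp (χ * n / 2) :=
  (le_mul_of_one_le_left (abs_nonneg _) (hv n hn).2.1.one_le_uPes).trans
    (hv.uPes_mul_abs_sub_le hA hε0 hεK hεχ hy hz n hn)

lemma dhat_le_of_forall_abs_sub_le {C : ℝ} (h : ∀ n : ℤ, n ≤ 0 → |y n - z n| ≤ C) :
    dhat y z ≤ C := by
  refine Real.sSup_le ?_ ((abs_nonneg _).trans (h 0 le_rfl))
  rintro _ ⟨n, hn, rfl⟩
  exact (mul_le_of_le_one_left (abs_nonneg _)
    (zpow_le_one_of_nonpos₀ one_le_two hn)).trans (h n hn)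

end Contraction

/-- exponential contraction in the past along unstable sets. -/
theorem unstable_contraction (F : GoodMap) (hA : F.SatA) (χ : ℝ) (hχ : 0 < χ) :
    ∃ ε₀ > 0, ∀ ε : ℝ, 0 < ε → ε < ε₀ →
      ∀ v : ℤ → Chart, (∀ n : ℤ, n ≤ 0 → WeakEdge F χ ε (v (n - 1)) (v n)) →
      ∀ y z : ℤ → ℝ, inMhat F.f y → inMhat F.f z →
        (∀ n : ℤ, n ≤ 0 → y n ∈ chartRange F χ (v n)) →
        (∀ n : ℤ, n ≤ 0 → z n ∈ chartRange F χ (v n)) →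
        ∀ n : ℤ, n ≤ 0 →
          |y n - z n| ≤ 2 * (v 0).p * Real.exp (χ * (n:ℝ) / 2) ∧
          dhat (fhatI n y) (fhatI n z) ≤ 2 * (v 0).p * Real.exp (χ * (n:ℝ) / 2) := by
  have hK := F.hK
  refine ⟨min (1 / (2 * F.K)) (χ / (4 + χ)), lt_min (by positivity) (by positivity), ?_⟩
  intro ε hε hε₀ v hv y z hy hz hyv hzv
  have hεK : ε * (2 * F.K) ≤ 1 :=
    (le_div_iff₀ (by linarith)).1 (hε₀.le.trans (min_le_left _ _))
  have hεχ : ε * (4 + χ) ≤ χ :=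
    (le_div_iff₀ (by linarith)).1 (hε₀.le.trans (min_le_right _ _))
  have hdist : ∀ n : ℤ, n ≤ 0 → |y n - z n| ≤ 2 * (v 0).p * exp (χ * n / 2) :=
    IsNegWeakGPO.abs_sub_le hA hv hε.le hεK hεχ ⟨hy, hyv⟩ ⟨hz, hzv⟩
  have hp : 0 < (v 0).p := (hv 0 le_rfl).2.1.2.1
  refine fun n hn => ⟨hdist n hn, dhat_le_of_forall_abs_sub_le fun m hm => ?_⟩
  refine (hdist (m + n) (by omega)).trans ?_
  gcongr
  omega

end OneDim
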